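/- Let p ≥ q > 1 and define f : ℝ → ℝ by f(u) = u^p + u^q for u ≥ 0. Then for every u ≥ 0 the minorant and majorant satisfy f_m(u) := inf_{0<α<1} f(αu)/f(α) = min{ (u^p + u^q)/2, u^q } and f_M(u) := sup_{0<α<1} f(αu)/f(α) = max{ (u^p + u^q)/2, u^q }. -/

import Mathlib

/-!
Writing `A = u ^ p`, `B = u ^ q` and `s = α ^ (p - q) ∈ (0, 1]`, the quotient `f (α u) / f α` equals
`(s A + B) / (s + 1)`, a weighted mean of `(A + B) / 2` and `B`; this gives both bounds. The two
endpoints are limits of values of the quotient, as `α → 1` and as `α → 0` respectively, so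
`isGLB_of_mem_closure` and `isLUB_of_mem_closure` identify the infimum and the supremum.
When `p = q` the quotient is constant and `A = B`.
-/

open Set

open Filter Topology

/-- The quotient `f (α u) / f α` after cancelling `α ^ q` from numerator and denominator. -/
lemma sum_powers_ratio (p q α u : ℝ) (hα : 0 < α) (hu : 0 ≤ u) :
    ((α * u) ^ p + (α * u) ^ q) / (α ^ p + α ^ q)
      = (α ^ (p - q) * u ^ p + u ^ q) / (α ^ (p - q) + 1) := by
  have h : α ^ p = α ^ (p - q) * α ^ q := by
    rw [← Real.rpow_add hα]; ring_nf
  have h1 := Real.rpow_pos_of_pos hα q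
  have h2 := Real.rpow_pos_of_pos hα (p - q)
  rw [Real.mul_rpow hα.le hu, Real.mul_rpow hα.le hu, h,
    div_eq_div_iff (by positivity) (by positivity)]
  ring

lemma weighted_mean_bounds (A B s : ℝ) (hs : 0 < s) (hs1 : s ≤ 1) :
    min ((A + B) / 2) B ≤ (s * A + B) / (s + 1) ∧
      (s * A + B) / (s + 1) ≤ max ((A + B) / 2) B := by
  have h : 0 < s + 1 := by linarith
  constructor
  · rw [le_div_iff₀ h]
    rcases le_total A B with hAB | hAB
    · rw [min_eq_left (by linarith)]; nlinarith
    · rw [min_eq_right (by linarith)]; nlinarith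
  · rw [div_le_iff₀ h]
    rcases le_total A B with hAB | hAB
    · rw [max_eq_right (by linarith)]; nlinarith
    · rw [max_eq_left (by linarith)]; nlinarith

/-- Explicit computation of the minorant and majorant of `f(u) = u^p + u^q`,
`p ≥ q > 1`. -/
theorem minorant_majorant_sum_powers (p q : ℝ) (hq : 1 < q) (hqp : q ≤ p)
    (f : ℝ → ℝ) (hf : ∀ u : ℝ, 0 ≤ u → f u = u ^ p + u ^ q) :
    ∀ u : ℝ, 0 ≤ u →
      sInf ((fun α => f (α * u) / f α) '' Set.Ioo (0 : ℝ) 1)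
        = min ((u ^ p + u ^ q) / 2) (u ^ q) ∧
      sSup ((fun α => f (α * u) / f α) '' Set.Ioo (0 : ℝ) 1)
        = max ((u ^ p + u ^ q) / 2) (u ^ q) := by
  intro u hu
  set g : ℝ → ℝ := fun α => (α ^ (p - q) * u ^ p + u ^ q) / (α ^ (p - q) + 1) with hg
  have himg : (fun α => f (α * u) / f α) '' Ioo (0 : ℝ) 1 = g '' Ioo (0 : ℝ) 1 := by
    refine image_congr fun α hα => ?_
    simp only [hg]
    rw [hf _ (mul_nonneg hα.1.le hu), hf _ hα.1.le, sum_powers_ratio p q α u hα.1 hu]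
  rw [himg]
  have hr : 0 ≤ p - q := sub_nonneg.2 hqp
  have hne : (g '' Ioo (0 : ℝ) 1).Nonempty := (nonempty_Ioo.2 one_pos).image g
  have hbd : ∀ α ∈ Ioo (0 : ℝ) 1, min ((u ^ p + u ^ q) / 2) (u ^ q) ≤ g α ∧
      g α ≤ max ((u ^ p + u ^ q) / 2) (u ^ q) := fun α hα =>
    weighted_mean_bounds _ _ _ (Real.rpow_pos_of_pos hα.1 _)
      (Real.rpow_le_one hα.1.le hα.2.le hr)
  have hcont : ∀ a : ℝ, 0 ≤ a → ContinuousAt g a := fun a ha => by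
    have h1 : ContinuousAt (fun x : ℝ => x ^ (p - q)) a :=
      Real.continuousAt_rpow_const a (p - q) (Or.inr hr)
    have h2 : a ^ (p - q) + 1 ≠ 0 := by have := Real.rpow_nonneg ha (p - q); positivity
    exact ((h1.mul continuousAt_const).add continuousAt_const).div
      (h1.add continuousAt_const) h2
  have hcl : ∀ a ∈ Icc (0 : ℝ) 1, g a ∈ closure (g '' Ioo (0 : ℝ) 1) := fun a ha =>
    (hcont a ha.1).continuousWithinAt.mem_closure_image
      (by rwa [closure_Ioo zero_ne_one])
  have h1 : (u ^ p + u ^ q) / 2 ∈ closure (g '' Ioo (0 : ℝ) 1) := by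
    have h := hcl 1 (by simp)
    simp only [hg, Real.one_rpow, one_mul] at h
    norm_num at h
    exact h
  have h0 : u ^ q ∈ closure (g '' Ioo (0 : ℝ) 1) := by
    have h := hcl 0 (by simp)
    -- `0 ^ (p - q)` is `1` when `p = q`, but then `(A + B) / 2 = B`.
    have hval : g 0 = u ^ q := by
      rcases hqp.eq_or_lt with rfl | hlt
      · simp only [hg, sub_self, Real.rpow_zero]; ring
      · simp [hg, Real.zero_rpow (sub_pos.2 hlt).ne']
    rwa [hval] at h
  constructor
  · refine IsGLB.csInf_eq (isGLB_of_mem_closure ?_ ?_) hne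
    · rintro _ ⟨α, hα, rfl⟩; exact (hbd α hα).1
    · rcases min_choice ((u ^ p + u ^ q) / 2) (u ^ q) with h | h <;> rw [h] <;> assumption
  · refine IsLUB.csSup_eq (isLUB_of_mem_closure ?_ ?_) hne
    · rintro _ ⟨α, hα, rfl⟩; exact (hbd α hα).2
    · rcases max_choice ((u ^ p + u ^ q) / 2) (u ^ q) with h | h <;> rw [h] <;> assumption
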